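/- There exists a constant κ₂ > 0, depending only on the cut-off function χ, such that for all t, s ≥ 0 one has ‖∇u^χ(·,t) − ∇u^χ(·,s)‖²_{L²(ℝ²)} ≤ κ₂ |1/(1+t) − 1/(1+s)|. -/

import Mathlib

open MeasureTheory Real
open scoped ENNReal

noncomputable section

abbrev E2 := EuclideanSpace ℝ (Fin 2)

/-- The rotation `x ↦ x^⊥ = (-x₂, x₁)`. -/
noncomputable def perp (x : E2) : E2 :=
  (WithLp.equiv 2 (Fin 2 → ℝ)).symm ![-(x 1), x 0]

/-- The Oseen vortex velocity field `Θ(x,t)`. -/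
noncomputable def Theta (t : ℝ) (x : E2) : E2 :=
  ((1 / (2 * π)) * (1 - Real.exp (-‖x‖ ^ 2 / (4 * (1 + t)))) / ‖x‖ ^ 2) • perp x

/-- The Oseen vorticity `Ξ(x,t)`. -/
noncomputable def Xi (t : ℝ) (x : E2) : ℝ :=
  (1 / (4 * π * (1 + t))) * Real.exp (-‖x‖ ^ 2 / (4 * (1 + t)))

/-- A smooth radially symmetric cut-off function, nondecreasing along rays,
vanishing on `{‖x‖ ≤ ρ}` and equal to `1` on `{‖x‖ ≥ M}`. -/
structure IsCutoff (χ : E2 → ℝ) (ρ M : ℝ) : Prop where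
  smooth : ContDiff ℝ (⊤ : ℕ∞) χ
  mem01 : ∀ x : E2, χ x ∈ Set.Icc (0 : ℝ) 1
  radial_mono : ∀ x y : E2, ‖x‖ ≤ ‖y‖ → χ x ≤ χ y
  zero_near : ∀ x : E2, ‖x‖ ≤ ρ → χ x = 0
  one_far : ∀ x : E2, M ≤ ‖x‖ → χ x = 1
  rho_pos : 0 < ρ
  rho_lt_M : ρ < M

/-- The truncated Oseen vortex `u^χ(x,t) = χ(x) Θ(x,t)`. -/
noncomputable def uchi (χ : E2 → ℝ) (t : ℝ) (x : E2) : E2 := χ x • Theta t x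

/-- The Laplacian of a scalar function on `ℝ²`. -/
noncomputable def lap (f : E2 → ℝ) (x : E2) : ℝ :=
  ∑ i : Fin 2, fderiv ℝ (fun y => fderiv ℝ f y (EuclideanSpace.single i 1)) x
    (EuclideanSpace.single i 1)

/-- The remainder term `R^χ(x,t) = Θ Δχ + 2 ((x·∇χ)/|x|²)(x^⊥ Ξ − Θ)`. -/
noncomputable def Rchi (χ : E2 → ℝ) (t : ℝ) (x : E2) : E2 :=
  lap χ x • Theta t x + (2 * fderiv ℝ χ x x / ‖x‖ ^ 2) • (Xi t x • perp x - Theta t x)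

/-!
With `a = 1 / (4 (1 + t))` and `b = 1 / (4 (1 + s))`, the difference `u^χ(·,t) - u^χ(·,s)` is
`(2π)⁻¹ χ(x) g(|x|²) x^⊥`, where `g(q) = (e^{-bq} - e^{-aq}) / q`. Since `e^{-y}` and
`(1 + y) e^{-y}` are 1-Lipschitz from `[0, ∞)` to `[0, 1]`, both `|g(q)|` and `q |g'(q)|` are at
most `2d / (1 + dq)` with `d = |a - b|`. As `χ` and `|x| |∇χ|` are bounded, the gradient of the
difference is `O(d / (1 + d|x|²))`, and the substitution `x ↦ √d x` shows that the square of this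
kernel has integral proportional to `d` in dimension two.
-/

section Saturation

open Set

lemma abs_sub_le_two_mul_dist_div_one_add_dist {α : Type*} [PseudoMetricSpace α] {f : α → ℝ}
    {S : Set α} (hf : LipschitzOnWith 1 f S) (hfS : MapsTo f S (Icc 0 1)) {y z : α} (hy : y ∈ S)
    (hz : z ∈ S) : |f y - f z| ≤ 2 * dist y z / (1 + dist y z) := by
  have le_dist : |f y - f z| ≤ dist y z := by
    simpa [Real.dist_eq] using hf.dist_le_mul y hy z hz
  have le_one : |f y - f z| ≤ 1 := by
    simpa using abs_sub_le_of_le_of_le (hfS hy).1 (hfS hy).2 (hfS hz).1 (hfS hz).2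
  rw [le_div_iff₀ (by positivity)]
  linarith [mul_le_mul_of_nonneg_right le_one (dist_nonneg (x := y) (y := z))]

lemma abs_sub_comp_mul_div_le {f : ℝ → ℝ} (hf : LipschitzOnWith 1 f (Ici 0))
    (hf01 : MapsTo f (Ici 0) (Icc 0 1)) {a b q : ℝ} (ha : 0 ≤ a) (hb : 0 ≤ b) (hq : 0 < q) :
    |f (a * q) - f (b * q)| / q ≤ 2 * (|a - b| / (1 + |a - b| * q)) := by
  have dist_eq : dist (a * q) (b * q) = |a - b| * q := by
    rw [Real.dist_eq, ← sub_mul, abs_mul, abs_of_pos hq]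
  have bound := abs_sub_le_two_mul_dist_div_one_add_dist hf hf01
    (mul_nonneg ha hq.le) (mul_nonneg hb hq.le)
  rw [dist_eq] at bound
  calc |f (a * q) - f (b * q)| / q
      ≤ 2 * (|a - b| * q) / (1 + |a - b| * q) / q := by gcongr
    _ = 2 * (|a - b| / (1 + |a - b| * q)) := by field_simp

lemma lipschitzOnWith_exp_neg : LipschitzOnWith 1 (fun y : ℝ ↦ exp (-y)) (Ici 0) := by
  refine (convex_Ici 0).lipschitzOnWith_of_nnnorm_hasDerivWithin_le
    (fun y _ ↦ (hasDerivAt_neg y).exp.hasDerivWithinAt) fun y (hy : 0 ≤ y) ↦ ?_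
  rw [← NNReal.coe_le_coe, coe_nnnorm]
  simpa using hy

lemma mapsTo_exp_neg : MapsTo (fun y : ℝ ↦ exp (-y)) (Ici 0) (Icc 0 1) := fun y (hy : 0 ≤ y) ↦
  ⟨(exp_pos _).le, exp_le_one_iff.2 (neg_nonpos.2 hy)⟩

lemma hasDerivAt_one_add_mul_exp_neg (y : ℝ) :
    HasDerivAt (fun y ↦ (1 + y) * exp (-y)) (-(y * exp (-y))) y := by
  refine (((hasDerivAt_id y).const_add 1).mul (hasDerivAt_neg y).exp).congr_deriv ?_
  simp only [id]
  ring

lemma lipschitzOnWith_one_add_mul_exp_neg :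
    LipschitzOnWith 1 (fun y : ℝ ↦ (1 + y) * exp (-y)) (Ici 0) := by
  refine (convex_Ici 0).lipschitzOnWith_of_nnnorm_hasDerivWithin_le
    (fun y _ ↦ (hasDerivAt_one_add_mul_exp_neg y).hasDerivWithinAt) fun y (hy : 0 ≤ y) ↦ ?_
  rw [← NNReal.coe_le_coe, coe_nnnorm, norm_neg, Real.norm_of_nonneg (by positivity)]
  exact (mul_exp_neg_le_exp_neg_one y).trans (exp_le_one_iff.2 (by norm_num))

lemma mapsTo_one_add_mul_exp_neg :
    MapsTo (fun y : ℝ ↦ (1 + y) * exp (-y)) (Ici 0) (Icc 0 1) := fun y (hy : 0 ≤ y) ↦ by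
  refine ⟨by positivity, ?_⟩
  change (1 + y) * exp (-y) ≤ 1
  rw [exp_neg, ← div_eq_mul_inv, div_le_one (exp_pos y), add_comm]
  exact add_one_le_exp y

end Saturation

section RadialProfile

/-- The radial profile `q ↦ (1 - e^{-aq}) / q` of the Oseen vortex as a function of `q = |x|²`, at
inverse scale `a = 1 / (4 (1 + t))`; its value at `q = 0` is the junk value `0`. -/
def oseenProfile (a q : ℝ) : ℝ := (1 - exp (-(a * q))) / q

lemma hasDerivAt_oseenProfile (a : ℝ) {q : ℝ} (hq : q ≠ 0) :
    HasDerivAt (oseenProfile a) (((1 + a * q) * exp (-(a * q)) - 1) / q ^ 2) q := by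
  have deriv_exponent : HasDerivAt (fun q : ℝ ↦ -(a * q)) (-(a * 1)) q :=
    ((hasDerivAt_id q).const_mul a).neg
  refine ((deriv_exponent.exp.const_sub 1).div (hasDerivAt_id q) hq).congr_deriv ?_
  simp only [id]
  ring

variable {a b q : ℝ}

lemma abs_oseenProfile_sub_le (ha : 0 ≤ a) (hb : 0 ≤ b) (hq : 0 < q) :
    |oseenProfile a q - oseenProfile b q| ≤ 2 * (|a - b| / (1 + |a - b| * q)) := by
  have sub_eq : oseenProfile a q - oseenProfile b q = -(exp (-(a * q)) - exp (-(b * q))) / q := by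
    simp only [oseenProfile]
    ring
  rw [sub_eq, abs_div, abs_neg, abs_of_pos hq]
  exact abs_sub_comp_mul_div_le lipschitzOnWith_exp_neg mapsTo_exp_neg ha hb hq

lemma abs_deriv_oseenProfile_sub_mul_le (ha : 0 ≤ a) (hb : 0 ≤ b) (hq : 0 < q) :
    |deriv (oseenProfile a) q - deriv (oseenProfile b) q| * q ≤
      2 * (|a - b| / (1 + |a - b| * q)) := by
  rw [(hasDerivAt_oseenProfile a hq.ne').deriv, (hasDerivAt_oseenProfile b hq.ne').deriv,
    ← sub_div, sub_sub_sub_cancel_right, abs_div, abs_of_pos (pow_pos hq 2), sq, ← div_div,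
    div_mul_cancel₀ _ hq.ne']
  exact abs_sub_comp_mul_div_le lipschitzOnWith_one_add_mul_exp_neg mapsTo_one_add_mul_exp_neg
    ha hb hq

end RadialProfile

section RadialField

variable {E F : Type*} [NormedAddCommGroup E] [InnerProductSpace ℝ E]
  [NormedAddCommGroup F] [NormedSpace ℝ F] {χ : E → ℝ} {g : ℝ → ℝ} {x : E}

lemma hasFDerivAt_mul_normSq_smul (J : E →L[ℝ] F) (hχ : DifferentiableAt ℝ χ x)
    (hg : DifferentiableAt ℝ g (‖x‖ ^ 2)) :
    HasFDerivAt (fun y ↦ (χ y * g (‖y‖ ^ 2)) • J y)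
      ((χ x * g (‖x‖ ^ 2)) • J +
        (χ x • deriv g (‖x‖ ^ 2) • 2 • innerSL ℝ x +
          g (‖x‖ ^ 2) • fderiv ℝ χ x).smulRight (J x)) x :=
  have normSq := (hasStrictFDerivAt_norm_sq x).hasFDerivAt
  (hχ.hasFDerivAt.mul (hg.hasDerivAt.comp_hasFDerivAt x normSq)).smul J.hasFDerivAt

lemma norm_fderiv_mul_normSq_smul_le (J : E →L[ℝ] F) (hχ : DifferentiableAt ℝ χ x)
    (hg : DifferentiableAt ℝ g (‖x‖ ^ 2)) :
    ‖fderiv ℝ (fun y ↦ (χ y * g (‖y‖ ^ 2)) • J y) x‖ ≤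
      ‖J‖ * (|g (‖x‖ ^ 2)| * (|χ x| + ‖fderiv ℝ χ x‖ * ‖x‖) +
        2 * |χ x| * (|deriv g (‖x‖ ^ 2)| * ‖x‖ ^ 2)) := by
  rw [(hasFDerivAt_mul_normSq_smul J hχ hg).fderiv]
  set p := g (‖x‖ ^ 2)
  set p' := deriv g (‖x‖ ^ 2)
  have covector_le : ‖χ x • p' • 2 • innerSL ℝ x + p • fderiv ℝ χ x‖ ≤
      |χ x| * (|p'| * (2 * ‖x‖)) + |p| * ‖fderiv ℝ χ x‖ := by
    refine (norm_add_le _ _).trans_eq ?_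
    simp only [norm_smul, RCLike.norm_nsmul ℝ, nsmul_eq_mul, innerSL_apply_norm, Real.norm_eq_abs,
      Nat.cast_ofNat]
  refine (norm_add_le _ _).trans ?_
  rw [norm_smul, ContinuousLinearMap.norm_smulRight_apply, norm_mul, Real.norm_eq_abs,
    Real.norm_eq_abs]
  calc |χ x| * |p| * ‖J‖ + ‖χ x • p' • 2 • innerSL ℝ x + p • fderiv ℝ χ x‖ * ‖J x‖
      ≤ |χ x| * |p| * ‖J‖ +
          (|χ x| * (|p'| * (2 * ‖x‖)) + |p| * ‖fderiv ℝ χ x‖) * (‖J‖ * ‖x‖) := by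
        gcongr
        exact J.le_opNorm x
    _ = ‖J‖ * (|p| * (|χ x| + ‖fderiv ℝ χ x‖ * ‖x‖) + 2 * |χ x| * (|p'| * ‖x‖ ^ 2)) := by ring

end RadialField

section TruncatedVortex

/-- The rotation `perp` by a right angle, bundled as a linear isometry. -/
def perpₗᵢ : E2 →ₗᵢ[ℝ] E2 where
  toFun := perp
  map_add' x y := by ext i; fin_cases i <;> simp [perp, add_comm]
  map_smul' c x := by ext i; fin_cases i <;> simp [perp]
  norm_map' x := by simp [EuclideanSpace.norm_eq, perp, Fin.sum_univ_two, add_comm]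

variable {χ : E2 → ℝ}

lemma uchi_eq_smul_oseenProfile (χ : E2 → ℝ) (t : ℝ) :
    uchi χ t = (2 * π)⁻¹ • fun x ↦ (χ x * oseenProfile (4 * (1 + t))⁻¹ (‖x‖ ^ 2)) •
      perpₗᵢ.toContinuousLinearMap x := by
  funext x
  have exponent_eq : -‖x‖ ^ 2 / (4 * (1 + t)) = -((4 * (1 + t))⁻¹ * ‖x‖ ^ 2) := by ring
  change χ x • Theta t x = (2 * π)⁻¹ • (χ x * oseenProfile _ (‖x‖ ^ 2)) • perp x
  simp only [Theta, smul_smul, oseenProfile, exponent_eq]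
  congr 1
  ring

lemma uchi_sub_uchi_eq (χ : E2 → ℝ) (t s : ℝ) :
    uchi χ t - uchi χ s = (2 * π)⁻¹ • fun x ↦
      (χ x * (oseenProfile (4 * (1 + t))⁻¹ - oseenProfile (4 * (1 + s))⁻¹) (‖x‖ ^ 2)) •
        perpₗᵢ.toContinuousLinearMap x := by
  rw [uchi_eq_smul_oseenProfile, uchi_eq_smul_oseenProfile, ← smul_sub]
  congr 1
  funext x
  simp only [Pi.sub_apply, mul_sub, sub_smul]

lemma differentiableAt_uchi (t : ℝ) {x : E2} (hx : x ≠ 0) (hχ : DifferentiableAt ℝ χ x) :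
    DifferentiableAt ℝ (uchi χ t) x := by
  rw [uchi_eq_smul_oseenProfile]
  exact (hasFDerivAt_mul_normSq_smul _ hχ
    (hasDerivAt_oseenProfile _ (by positivity)).differentiableAt).differentiableAt.const_smul _

lemma norm_fderiv_uchi_sub_le {B K t s : ℝ} {x : E2} (hx : x ≠ 0) (hχ : DifferentiableAt ℝ χ x)
    (hB : |χ x| ≤ B) (hK : ‖fderiv ℝ χ x‖ * ‖x‖ ≤ K) (ht : -1 < t) (hs : -1 < s) :
    ‖fderiv ℝ (uchi χ t) x - fderiv ℝ (uchi χ s) x‖ ≤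
      (3 * B + K) / π * (|(4 * (1 + t))⁻¹ - (4 * (1 + s))⁻¹| /
        (1 + |(4 * (1 + t))⁻¹ - (4 * (1 + s))⁻¹| * ‖x‖ ^ 2)) := by
  have ha : 0 ≤ (4 * (1 + t))⁻¹ := inv_nonneg.2 (by linarith)
  have hb : 0 ≤ (4 * (1 + s))⁻¹ := inv_nonneg.2 (by linarith)
  rw [← fderiv_sub (differentiableAt_uchi t hx hχ) (differentiableAt_uchi s hx hχ),
    uchi_sub_uchi_eq]
  set a := (4 * (1 + t))⁻¹
  set b := (4 * (1 + s))⁻¹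
  have hq : 0 < ‖x‖ ^ 2 := by positivity
  have hB₀ : 0 ≤ B := (abs_nonneg _).trans hB
  have diff_a := (hasDerivAt_oseenProfile a hq.ne').differentiableAt
  have diff_b := (hasDerivAt_oseenProfile b hq.ne').differentiableAt
  have profile_le := abs_oseenProfile_sub_le ha hb hq
  have deriv_le := abs_deriv_oseenProfile_sub_mul_le ha hb hq
  have field_le := norm_fderiv_mul_normSq_smul_le perpₗᵢ.toContinuousLinearMap hχ
    (diff_a.sub diff_b)
  rw [deriv_sub diff_a diff_b] at field_le
  set k := |a - b| / (1 + |a - b| * ‖x‖ ^ 2)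
  rw [fderiv_const_smul_field, Pi.smul_apply, norm_smul, Real.norm_of_nonneg (by positivity)]
  calc _ ≤ (2 * π)⁻¹ * (1 * (2 * k * (B + K) + 2 * B * (2 * k))) := by
        refine mul_le_mul_of_nonneg_left (field_le.trans ?_) (by positivity)
        gcongr
        · exact perpₗᵢ.norm_toContinuousLinearMap_le
        · exact profile_le
    _ = (3 * B + K) / π * k := by
        field_simp
        ring

end TruncatedVortex

section PlanarKernel

open Module

lemma eLpNorm_two_sq_eq_ofReal_integral_norm_sq {α F : Type*} [MeasurableSpace α]
    [NormedAddCommGroup F] {ν : Measure α} {f : α → F} (hf : MemLp f 2 ν) :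
    eLpNorm f 2 ν ^ 2 = ENNReal.ofReal (∫ x, ‖f x‖ ^ 2 ∂ν) := by
  have pow_eq := eLpNorm_nnreal_pow_eq_lintegral (μ := ν) (f := f) (p := 2) two_ne_zero
  simp only [NNReal.coe_ofNat, ENNReal.coe_ofNat, ENNReal.rpow_ofNat] at pow_eq
  rw [ofReal_integral_eq_lintegral_ofReal hf.norm.integrable_sq (.of_forall fun x ↦ sq_nonneg _),
    pow_eq]
  simp only [ENNReal.ofReal_pow (norm_nonneg _), ofReal_norm]

lemma div_one_add_mul_normSq_eq_comp_smul {E : Type*} [SeminormedAddCommGroup E]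
    [NormedSpace ℝ E] {d : ℝ} (hd : 0 ≤ d) (x : E) :
    d / (1 + d * ‖x‖ ^ 2) = d * (1 + ‖√d • x‖ ^ 2)⁻¹ := by
  rw [norm_smul, mul_pow, Real.norm_of_nonneg (sqrt_nonneg d), sq_sqrt hd, div_eq_mul_inv]

variable {E : Type*} [NormedAddCommGroup E] [NormedSpace ℝ E] [FiniteDimensional ℝ E]
  [MeasurableSpace E] [BorelSpace E] (μ : Measure E) [μ.IsAddHaarMeasure]

lemma memLp_inv_one_add_normSq (hE : finrank ℝ E < 4) :
    MemLp (fun x : E ↦ (1 + ‖x‖ ^ 2)⁻¹) 2 μ := by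
  rw [memLp_two_iff_integrable_sq (Measurable.aestronglyMeasurable (by fun_prop))]
  refine (integrable_rpow_neg_one_add_norm_sq (μ := μ) (r := 4) (mod_cast hE)).congr
    (.of_forall fun x ↦ ?_)
  change (1 + ‖x‖ ^ 2) ^ (-4 / 2 : ℝ) = ((1 + ‖x‖ ^ 2)⁻¹) ^ 2
  rw [show (-4 / 2 : ℝ) = -(2 : ℕ) by norm_num, rpow_neg (by positivity), rpow_natCast, inv_pow]

lemma integral_sq_div_one_add_mul_normSq (hE : finrank ℝ E = 2) {d : ℝ} (hd : 0 ≤ d) :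
    ∫ x : E, (d / (1 + d * ‖x‖ ^ 2)) ^ 2 ∂μ = d * ∫ x : E, ((1 + ‖x‖ ^ 2)⁻¹) ^ 2 ∂μ := by
  simp only [div_one_add_mul_normSq_eq_comp_smul hd, mul_pow]
  rw [integral_const_mul, μ.integral_comp_smul (fun x : E ↦ ((1 + ‖x‖ ^ 2)⁻¹) ^ 2) (√d), hE,
    sq_sqrt hd, abs_of_nonneg (inv_nonneg.2 hd), smul_eq_mul, ← mul_assoc]
  congr 1
  rw [sq, mul_self_mul_inv]

lemma memLp_div_one_add_mul_normSq (hE : finrank ℝ E < 4) {d : ℝ} (hd : 0 ≤ d) :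
    MemLp (fun x : E ↦ d / (1 + d * ‖x‖ ^ 2)) 2 μ := by
  rcases hd.eq_or_lt with rfl | hd_pos
  · simp
  · simp only [div_one_add_mul_normSq_eq_comp_smul hd]
    refine MemLp.const_mul ?_ d
    rw [memLp_two_iff_integrable_sq (Measurable.aestronglyMeasurable (by fun_prop))]
    exact (memLp_inv_one_add_normSq μ hE).integrable_sq.comp_smul (sqrt_pos.2 hd_pos).ne'

lemma eLpNorm_two_sq_const_mul_div_one_add_mul_normSq (hE : finrank ℝ E = 2) (C : ℝ) {d : ℝ}
    (hd : 0 ≤ d) :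
    eLpNorm (fun x : E ↦ C * (d / (1 + d * ‖x‖ ^ 2))) 2 μ ^ 2 =
      ENNReal.ofReal (C ^ 2 * (d * ∫ x : E, ((1 + ‖x‖ ^ 2)⁻¹) ^ 2 ∂μ)) := by
  rw [eLpNorm_two_sq_eq_ofReal_integral_norm_sq
    ((memLp_div_one_add_mul_normSq μ (by lia) hd).const_mul C)]
  simp only [Real.norm_eq_abs, sq_abs, mul_pow C]
  rw [integral_const_mul, integral_sq_div_one_add_mul_normSq μ hE hd]

end PlanarKernel

section Cutoff

lemma exists_norm_fderiv_mul_norm_le_of_hasCompactSupport {E F : Type*}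
    [NormedAddCommGroup E] [NormedSpace ℝ E] [NormedAddCommGroup F] [NormedSpace ℝ F]
    {f : E → F} (hf : ContDiff ℝ 1 f) (hf_supp : HasCompactSupport f) :
    ∃ K, ∀ x, ‖fderiv ℝ f x‖ * ‖x‖ ≤ K := by
  have supp : HasCompactSupport fun x ↦ ‖fderiv ℝ f x‖ * ‖x‖ :=
    (hf_supp.fderiv ℝ).norm.mul_right
  obtain ⟨K, hK⟩ := supp.exists_bound_of_continuous
    ((hf.continuous_fderiv one_ne_zero).norm.mul continuous_norm)
  exact ⟨K, fun x ↦ (le_abs_self _).trans (hK x)⟩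

lemma IsCutoff.abs_le_one {χ : E2 → ℝ} {ρ M : ℝ} (hχ : IsCutoff χ ρ M) (x : E2) : |χ x| ≤ 1 :=
  abs_le.2 ⟨by linarith [(hχ.mem01 x).1], (hχ.mem01 x).2⟩

lemma IsCutoff.exists_norm_fderiv_mul_norm_le {χ : E2 → ℝ} {ρ M : ℝ} (hχ : IsCutoff χ ρ M) :
    ∃ K, ∀ x, ‖fderiv ℝ χ x‖ * ‖x‖ ≤ K := by
  have supp : HasCompactSupport fun x ↦ χ x - 1 :=
    .intro (isCompact_closedBall 0 M) fun x hx ↦ by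
      rw [hχ.one_far x (by simpa using (not_le.1 (by simpa using hx)).le), sub_self]
  simpa only [fderiv_sub_const] using exists_norm_fderiv_mul_norm_le_of_hasCompactSupport
    ((hχ.smooth.of_le (by simp)).sub contDiff_const) supp

end Cutoff

theorem grad_uchi_L2_difference_bound_general {χ : E2 → ℝ} {B K : ℝ}
    (hχ : ∀ x ≠ 0, DifferentiableAt ℝ χ x) (hB : ∀ x, |χ x| ≤ B)
    (hK : ∀ x, ‖fderiv ℝ χ x‖ * ‖x‖ ≤ K) :
    ∃ κ₂ : ℝ, 0 < κ₂ ∧ ∀ t s : ℝ, -1 < t → -1 < s →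
      (eLpNorm (fun x => fderiv ℝ (uchi χ t) x - fderiv ℝ (uchi χ s) x) 2 volume) ^ 2 ≤
        ENNReal.ofReal (κ₂ * |1 / (1 + t) - 1 / (1 + s)|) := by
  set C := (3 * B + K) / π
  set I := ∫ x : E2, ((1 + ‖x‖ ^ 2)⁻¹) ^ 2
  have : 0 ≤ I := integral_nonneg fun x ↦ by positivity
  refine ⟨C ^ 2 * I / 4 + 1, by positivity, fun t s ht hs ↦ ?_⟩
  have scale_eq : |(4 * (1 + t))⁻¹ - (4 * (1 + s))⁻¹| = |1 / (1 + t) - 1 / (1 + s)| / 4 := by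
    rw [mul_inv, mul_inv, ← mul_sub, abs_mul, abs_of_pos (by norm_num), one_div, one_div,
      inv_mul_eq_div]
  have pointwise : ∀ᵐ x : E2, ‖fderiv ℝ (uchi χ t) x - fderiv ℝ (uchi χ s) x‖ ≤ _ :=
    (Measure.ae_ne volume 0).mono fun x hx ↦
      norm_fderiv_uchi_sub_le hx (hχ x hx) (hB x) (hK x) ht hs
  rw [scale_eq] at pointwise
  set δ := |1 / (1 + t) - 1 / (1 + s)|
  have hd : 0 ≤ δ / 4 := by positivity
  calc _ ≤ eLpNorm (fun x : E2 ↦ C * (δ / 4 / (1 + δ / 4 * ‖x‖ ^ 2))) 2 volume ^ 2 := by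
        gcongr
        exact eLpNorm_mono_ae_real pointwise
    _ = ENNReal.ofReal (C ^ 2 * (δ / 4 * I)) :=
        eLpNorm_two_sq_const_mul_div_one_add_mul_normSq volume (by simp) C hd
    _ ≤ ENNReal.ofReal ((C ^ 2 * I / 4 + 1) * δ) := ENNReal.ofReal_le_ofReal (by linarith)

/-- There is `κ₂ > 0`, depending only on `χ`, with
`‖∇u^χ(·,t) − ∇u^χ(·,s)‖²_{L²(ℝ²)} ≤ κ₂ |1/(1+t) − 1/(1+s)|` for all `t, s ≥ 0`. -/
theorem grad_uchi_L2_difference_bound (χ : E2 → ℝ) (ρ M : ℝ) (hχ : IsCutoff χ ρ M) :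
    ∃ κ₂ : ℝ, 0 < κ₂ ∧ ∀ t s : ℝ, 0 ≤ t → 0 ≤ s →
      (eLpNorm (fun x => fderiv ℝ (uchi χ t) x - fderiv ℝ (uchi χ s) x) 2 volume) ^ 2 ≤
        ENNReal.ofReal (κ₂ * |1 / (1 + t) - 1 / (1 + s)|) := by
  obtain ⟨K, hK⟩ := hχ.exists_norm_fderiv_mul_norm_le
  obtain ⟨κ₂, hκ₂, bound⟩ := grad_uchi_L2_difference_bound_general
    (fun x _ ↦ hχ.smooth.differentiable (by simp) x) hχ.abs_le_one hK
  exact ⟨κ₂, hκ₂, fun t s ht hs ↦ bound t s (by linarith) (by linarith)⟩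

end
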